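/- For every t ∈ F_q, the sum (q²/2) · Σ_{ν ∈ F_q, ν ≠ 0, Tr(ν) = 0} Σ_{a, b, c ∈ F_q, a,b,c ≠ 0} φ(t + a + b + a⁻¹·b⁻¹·c²·ν) equals −φ(t)·q²·(q−2)/4. -/

import Mathlib

/-!
Write `φ x = (-1)^(Tr x)`, a nontrivial additive character of `F`. For fixed `ν, a, b`, all
nonzero, the map `c ↦ a⁻¹ b⁻¹ c² ν` permutes `Fˣ`, because squaring is injective in
characteristic two. Hence the sum over `c` only contributes the factor `∑_{u ≠ 0} φ u = -1`,
and the sums over `a` and `b` then factor off in the same way, so that each `ν` contributes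
`-φ t`. The trace is a nonzero linear form, so there are `q / 2 - 1` admissible `ν`.
-/

/-- The additive character `x ↦ (-1)^(Tr x)`, as a plain function. -/
noncomputable def phi (F : Type) [Field F] [Algebra (ZMod 2) F] (x : F) : ℂ :=
  (-1 : ℂ) ^ (Algebra.trace (ZMod 2) F x).val

lemma phi_add (F : Type) [Field F] [Algebra (ZMod 2) F] (x y : F) :
    phi F (x + y) = phi F x * phi F y := by
  have key : ∀ u v : ZMod 2, (-1 : ℂ) ^ (u + v).val = (-1) ^ u.val * (-1) ^ v.val := by
    intro u v
    rw [ZMod.val_add, ← pow_add]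
    exact (neg_one_pow_eq_pow_mod_two _).symm
  simp only [phi, map_add, key]

lemma phi_sum (F : Type) [Field F] [Fintype F] [Algebra (ZMod 2) F] :
    ∑ x : F, phi F x = 0 := by
  obtain ⟨z, hz⟩ := Algebra.trace_surjective (ZMod 2) F 1
  have hz' : phi F z = -1 := by simp [phi, hz, ZMod.val_one]
  -- translating by an element of trace one negates the sum
  have h : ∑ x : F, phi F x = ∑ x : F, phi F (x + z) :=
    (Equiv.sum_comp (Equiv.addRight z) (phi F)).symm
  simp only [phi_add, hz', ← Finset.sum_mul] at h
  linear_combination h / 2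

lemma phi_zero (F : Type) [Field F] [Algebra (ZMod 2) F] : phi F 0 = 1 := by simp [phi]

lemma phi_sum_units (F : Type) [Field F] [Fintype F] [DecidableEq F] [Algebra (ZMod 2) F] :
    ∑ u : Fˣ, phi F (u : F) = -1 := by
  have h1 : ∑ u : Fˣ, phi F (u : F) = ∑ x : {x : F // x ≠ 0}, phi F x :=
    Equiv.sum_comp unitsEquivNeZero (fun x : {x : F // x ≠ 0} => phi F x)
  have h2 : ∑ x : {x : F // x ≠ 0}, phi F x = ∑ x ∈ Finset.univ.erase (0 : F), phi F x :=
    (Finset.sum_subtype _ (by simp) _).symm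
  have h3 := Finset.add_sum_erase Finset.univ (phi F) (Finset.mem_univ (0 : F))
  rw [phi_sum, phi_zero] at h3
  rw [h1, h2]
  linear_combination h3

lemma phi_sum_sq (F : Type) [Field F] [Fintype F] [DecidableEq F] [Algebra (ZMod 2) F]
    (k : Fˣ) : ∑ c : Fˣ, phi F (k * (c : F) ^ 2) = -1 := by
  have : CharP F 2 := charP_of_injective_algebraMap (algebraMap (ZMod 2) F).injective 2
  have hinj : Function.Injective (fun c : Fˣ => k * c ^ 2) := by
    intro c d h
    have h' : c ^ 2 = d ^ 2 := mul_left_cancel h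
    have h'' : (c : F) ^ 2 = (d : F) ^ 2 := by exact_mod_cast congrArg Units.val h'
    exact Units.ext (frobenius_inj F 2 h'')
  rw [← phi_sum_units F]
  have := (Finite.injective_iff_bijective.mp hinj).sum_comp (fun u : Fˣ => phi F (u : F))
  simpa using this

/-- The count comes from the indicator `(1 + φ ν) / 2` of `Tr ν = 0`. -/
lemma card_trace_zero (F : Type) [Field F] [Fintype F] [DecidableEq F] [Algebra (ZMod 2) F] :
    ((Finset.univ.filter
      (fun ν : F => ν ≠ 0 ∧ Algebra.trace (ZMod 2) F ν = 0)).card : ℂ)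
      = ((Fintype.card F : ℂ) - 2) / 2 := by
  have key : ∀ u : ZMod 2, (if u = 0 then (1 : ℂ) else 0) = (1 + (-1) ^ u.val) / 2 := by
    intro u
    obtain rfl | rfl : u = 0 ∨ u = 1 := by revert u; decide
    · simp
    · simp [ZMod.val_one]
  have h1 : ((Finset.univ.filter
      (fun ν : F => Algebra.trace (ZMod 2) F ν = 0)).card : ℂ) = (Fintype.card F : ℂ) / 2 := by
    rw [Finset.card_filter]
    push_cast
    simp only [key]
    rw [← Finset.sum_div, Finset.sum_add_distrib]
    have := phi_sum F
    simp only [phi] at this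
    rw [this]
    simp
  have h2 : Finset.univ.filter (fun ν : F => ν ≠ 0 ∧ Algebra.trace (ZMod 2) F ν = 0)
      = (Finset.univ.filter (fun ν : F => Algebra.trace (ZMod 2) F ν = 0)).erase 0 := by
    ext ν; simp
  have h3 := Finset.card_erase_add_one
    (s := Finset.univ.filter (fun ν : F => Algebra.trace (ZMod 2) F ν = 0)) (a := 0) (by simp)
  rw [← h2] at h3
  have h4 := congrArg (Nat.cast : ℕ → ℂ) h3
  push_cast at h4
  rw [h1] at h4
  linear_combination h4

/-- Let `q = 2^f` (`f ≥ 1`) and `F` the finite field with `q` elements, with trace map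
`Tr : F → F₂` and additive character `φ x = (-1)^(Tr x)`.  For every `t ∈ F`,
`(q²/2) · Σ_{ν ≠ 0, Tr ν = 0} Σ_{a,b,c ≠ 0} φ(t + a + b + a⁻¹ b⁻¹ c² ν)
  = - φ(t) · q² · (q - 2) / 4`. -/
theorem stmt5 (f : ℕ) (hf : 1 ≤ f)
    (F : Type) [Field F] [Fintype F] [DecidableEq F] [Algebra (ZMod 2) F]
    (hcard : Fintype.card F = 2 ^ f) (t : F) :
    (((2 ^ f : ℕ) : ℂ) ^ 2 / 2) *
        ∑ ν ∈ Finset.univ.filter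
            (fun ν : F => ν ≠ 0 ∧ Algebra.trace (ZMod 2) F ν = 0),
          ∑ a : Fˣ, ∑ b : Fˣ, ∑ c : Fˣ,
            (-1 : ℂ) ^ (Algebra.trace (ZMod 2) F
              (t + (a : F) + (b : F) + (a : F)⁻¹ * (b : F)⁻¹ * (c : F) ^ 2 * ν)).val
      = -((-1 : ℂ) ^ (Algebra.trace (ZMod 2) F t).val) *
          ((2 ^ f : ℕ) : ℂ) ^ 2 * (((2 ^ f : ℕ) : ℂ) - 2) / 4 := by
  have inner : ∀ ν ∈ Finset.univ.filter
      (fun ν : F => ν ≠ 0 ∧ Algebra.trace (ZMod 2) F ν = 0),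
      ∑ a : Fˣ, ∑ b : Fˣ, ∑ c : Fˣ,
        phi F (t + (a : F) + (b : F) + (a : F)⁻¹ * (b : F)⁻¹ * (c : F) ^ 2 * ν)
        = -phi F t := by
    intro ν hν
    have hν0 : ν ≠ 0 := (Finset.mem_filter.mp hν).2.1
    have hc : ∀ a b : Fˣ, ∑ c : Fˣ, phi F ((a : F)⁻¹ * (b : F)⁻¹ * (c : F) ^ 2 * ν) = -1 := by
      intro a b
      rw [← phi_sum_sq F (a⁻¹ * b⁻¹ * Units.mk0 ν hν0)]
      refine Finset.sum_congr rfl fun c _ => congrArg (phi F) ?_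
      push_cast
      rw [Units.val_mk0]
      ring
    simp only [phi_add, ← Finset.mul_sum, hc, ← Finset.sum_mul, phi_sum_units]
    ring
  have hsum := Finset.sum_congr rfl inner
  rw [Finset.sum_const, nsmul_eq_mul, card_trace_zero, hcard] at hsum
  simp only [phi] at hsum
  rw [hsum]
  ring
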